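/- arXiv:1208.0815 — 3 statements merged into one kernel-verified Lean document; each statement's English description precedes it below -/
import Mathlib

section
/- Let S be a set, let g : S → S and h : S → ℝ be maps with h(x) ≥ 1 for all x ∈ S, and let a ≥ 1 and c ≥ 1 be real constants. Suppose that for all x ∈ S one has h(g(x)) ≤ a·h(x) + c·√(h(x)). Then for all x ∈ S and all integers n ≥ 0, h(gⁿ(x)) ≤ aⁿ·( h(x) + (2√2·c)ⁿ·√(h(x)) ), where gⁿ denotes the n-fold iterate of g. -/
/-!
Up to the factor `aⁿ`, the recursion `uₙ₊₁ ≤ a uₙ + c √uₙ` grows only quadratically in `n`. By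
induction, `uₙ ≤ aⁿ (u₀ + n c √u₀ + (n choose 2) c² / 2)`: the right-hand side is at most
`aⁿ (√u₀ + n c / 2)²`, so `√uₙ ≤ aⁿ (√u₀ + n c / 2)`, and this is the increment that the next step
needs. If `u₀ ≥ 1`, the lower-order terms are at most `(n c + (n choose 2) c²) √u₀`, whose
coefficient is part of the binomial expansion of `(1 + c)ⁿ`; finally `1 + c ≤ 2√2 c` for `c ≥ 1`.
-/

theorem one_add_mul_add_choose_two_mul_sq_le_pow {R : Type*} [CommSemiring R] [PartialOrder R]
    [IsOrderedRing R] {c : R} (hc : 0 ≤ c) (n : ℕ) :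
    1 + n * c + n.choose 2 * c ^ 2 ≤ (1 + c) ^ n := by
  induction n with
  | zero => simp
  | succ n ih =>
    calc 1 + (n + 1 : ℕ) * c + (n + 1).choose 2 * c ^ 2
        ≤ 1 + (n + 1 : ℕ) * c + (n + 1).choose 2 * c ^ 2 + n.choose 2 * c ^ 3 :=
          le_add_of_nonneg_right (by positivity)
      _ = (1 + n * c + n.choose 2 * c ^ 2) * (1 + c) := by
          rw [Nat.choose_succ_succ' n 1, n.choose_one_right]; push_cast; ring
      _ ≤ (1 + c) ^ n * (1 + c) := by
          gcongr
          exact add_nonneg zero_le_one hc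
      _ = (1 + c) ^ (n + 1) := (pow_succ ..).symm

theorem mul_mul_add_choose_two_le_one_add_pow_mul {K : Type*} [Field K] [LinearOrder K]
    [IsStrictOrderedRing K] {c s : K} (hc : 0 ≤ c) (hs : 1 ≤ s) (n : ℕ) :
    n * c * s + n.choose 2 * c ^ 2 / 2 ≤ (1 + c) ^ n * s :=
  calc n * c * s + n.choose 2 * c ^ 2 / 2
      ≤ n * c * s + n.choose 2 * c ^ 2 * s := by
        gcongr
        exact (half_le_self (by positivity)).trans (le_mul_of_one_le_right (by positivity) hs)
    _ ≤ (1 + n * c + n.choose 2 * c ^ 2) * s := by linarith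
    _ ≤ (1 + c) ^ n * s := by
        gcongr
        exact one_add_mul_add_choose_two_mul_sq_le_pow hc n

theorem sqrt_le_mul_add_of_le_choose_two {A s c v : ℝ} (hA : 1 ≤ A) (hs : 0 ≤ s) (hc : 0 ≤ c)
    (n : ℕ) (hv : v ≤ A * (s ^ 2 + n * c * s + n.choose 2 * c ^ 2 / 2)) :
    √v ≤ A * (s + n * c / 2) := by
  have choose_le : (n.choose 2 : ℝ) ≤ n ^ 2 / 2 := by
    simpa using Nat.choose_le_pow_div (α := ℝ) 2 n
  refine Real.sqrt_le_iff.mpr ⟨by positivity, ?_⟩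
  calc v ≤ A * (s ^ 2 + n * c * s + n.choose 2 * c ^ 2 / 2) := hv
    _ ≤ A * (s ^ 2 + n * c * s + n ^ 2 / 2 * c ^ 2 / 2) := by gcongr
    _ = A * (s + n * c / 2) ^ 2 := by ring
    _ ≤ A ^ 2 * (s + n * c / 2) ^ 2 := by gcongr; exact le_self_pow₀ hA two_ne_zero
    _ = (A * (s + n * c / 2)) ^ 2 := (mul_pow ..).symm

theorem le_pow_mul_of_succ_le_mul_add_sqrt {u : ℕ → ℝ} {a c : ℝ} (ha : 1 ≤ a) (hc : 0 ≤ c)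
    (hu : ∀ n, 0 ≤ u n) (hstep : ∀ n, u (n + 1) ≤ a * u n + c * √(u n)) (n : ℕ) :
    u n ≤ a ^ n * (u 0 + n * c * √(u 0) + n.choose 2 * c ^ 2 / 2) := by
  induction n with
  | zero => simp
  | succ n ih =>
    have sqrt_le : √(u n) ≤ a ^ n * (√(u 0) + n * c / 2) :=
      sqrt_le_mul_add_of_le_choose_two (one_le_pow₀ ha) (Real.sqrt_nonneg _) hc n
        (by rwa [Real.sq_sqrt (hu 0)])
    calc u (n + 1) ≤ a * u n + c * √(u n) := hstep n
      _ ≤ a * (a ^ n * (u 0 + n * c * √(u 0) + n.choose 2 * c ^ 2 / 2))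
            + c * (a ^ n * (√(u 0) + n * c / 2)) := by gcongr
      _ ≤ a * (a ^ n * (u 0 + n * c * √(u 0) + n.choose 2 * c ^ 2 / 2))
            + c * (a ^ (n + 1) * (√(u 0) + n * c / 2)) := by
          gcongr
          exact n.le_succ
      _ = a ^ (n + 1) * (u 0 + (n + 1 : ℕ) * c * √(u 0) + (n + 1).choose 2 * c ^ 2 / 2) := by
          rw [Nat.choose_succ_succ' n 1, n.choose_one_right]; push_cast; ring

theorem one_add_le_two_mul_sqrt_two_mul {c : ℝ} (hc : 1 ≤ c) : 1 + c ≤ 2 * √2 * c := by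
  have hsqrt : 1 ≤ √2 := Real.one_le_sqrt.mpr one_le_two
  calc 1 + c ≤ 2 * 1 * c := by linarith
    _ ≤ 2 * √2 * c := by gcongr

theorem iterate_height_bound_general {S : Type*} (g : S → S) (h : S → ℝ)
    (h0 : ∀ x, 0 ≤ h x) (a c : ℝ) (ha : 1 ≤ a) (hc : 0 ≤ c)
    (hg : ∀ x, h (g x) ≤ a * h x + c * √(h x)) (x : S) (hx : 1 ≤ h x) (n : ℕ) :
    h (g^[n] x) ≤ a ^ n * (h x + (1 + c) ^ n * √(h x)) := by
  have hsqrt : 1 ≤ √(h x) := Real.one_le_sqrt.mpr hx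
  have step (k : ℕ) : h (g^[k + 1] x) ≤ a * h (g^[k] x) + c * √(h (g^[k] x)) := by
    simpa only [Function.iterate_succ_apply'] using hg (g^[k] x)
  calc h (g^[n] x) ≤ a ^ n * (h x + n * c * √(h x) + n.choose 2 * c ^ 2 / 2) :=
        le_pow_mul_of_succ_le_mul_add_sqrt (u := fun k => h (g^[k] x)) ha hc
          (fun k => h0 (g^[k] x)) step n
    _ ≤ a ^ n * (h x + (1 + c) ^ n * √(h x)) := by
        rw [add_assoc]
        gcongr
        exact mul_mul_add_choose_two_le_one_add_pow_mul hc hsqrt n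

/-- If `h ≥ 1`, `a, c ≥ 1`, and `h(g(x)) ≤ a·h(x) + c·√(h(x))` for all `x`, then
`h(gⁿ(x)) ≤ aⁿ·(h(x) + (2√2·c)ⁿ·√(h(x)))` for all `x` and `n`. -/
theorem iterate_height_bound {S : Type*} (g : S → S) (h : S → ℝ)
    (h1 : ∀ x, 1 ≤ h x) (a c : ℝ) (ha : 1 ≤ a) (hc : 1 ≤ c)
    (hg : ∀ x, h (g x) ≤ a * h x + c * Real.sqrt (h x)) :
    ∀ (x : S) (n : ℕ),
      h (g^[n] x) ≤ a ^ n * (h x + (2 * Real.sqrt 2 * c) ^ n * Real.sqrt (h x)) := by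
  intro x n
  refine (iterate_height_bound_general g h (fun y => zero_le_one.trans (h1 y)) a c ha
    (zero_le_one.trans hc) hg x (h1 x) n).trans ?_
  gcongr
  exact one_add_le_two_mul_sqrt_two_mul hc
end

section
/- Let h : ℕ → ℝ be a sequence with h(n) ≥ 1 for all n, and suppose that h(n)^{1/n} converges to a real number α with α > 1 as n → ∞. Then for every real B, the set {n ∈ ℕ : h(n) ≤ B} is finite, and lim_{B→∞} #{n ∈ ℕ : h(n) ≤ B} / log B = 1 / log α. -/
open Filter

/-! Put `u n = log (max (h n) 1)`, so that `u n / n → log α =: L > 0` and, for `B ≥ 1`, `h n ≤ B`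
means `u n ≤ log B`. It remains to count the `n` with `u n ≤ x`. If `c * n ≤ u n` for all `n ≥ N`,
then all but `N` of them are at most `x / c`; if `u n ≤ c * n` for all `n ≥ N`, then all but `N` of
the indices up to `x / c` are among them. Letting `c → L` from below and from above, the count is
asymptotic to `x / L`. -/

open scoped Topology

section LinearGrowth

variable {u : ℕ → ℝ} {c x L : ℝ} {N : ℕ}

lemma ncard_sublevel_le_of_mul_le (hc : 0 < c) (hx : 0 ≤ x) (hu : ∀ n ≥ N, c * n ≤ u n) :
    ({n | u n ≤ x}.ncard : ℝ) ≤ N + (x / c + 1) := by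
  have hsub : {n | u n ≤ x} ⊆ Set.Iio N ∪ Set.Iio (⌊x / c⌋₊ + 1) := fun n hn ↦
    (lt_or_ge n N).imp_right fun hNn ↦ Nat.lt_succ_of_le <| Nat.le_floor <|
      (le_div_iff₀' hc).2 <| (hu n hNn).trans hn
  have hcard : {n | u n ≤ x}.ncard ≤ N + (⌊x / c⌋₊ + 1) :=
    ((Set.ncard_le_ncard hsub).trans (Set.ncard_union_le _ _)).trans_eq (by simp)
  calc ({n | u n ≤ x}.ncard : ℝ) ≤ N + (⌊x / c⌋₊ + 1) := mod_cast hcard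
    _ ≤ N + (x / c + 1) := by gcongr; exact Nat.floor_le (by positivity)

lemma div_le_ncard_sublevel_of_le_mul (hc : 0 < c) (hfin : {n | u n ≤ x}.Finite)
    (hu : ∀ n ≥ N, u n ≤ c * n) : x / c ≤ N + {n | u n ≤ x}.ncard := by
  have hsub : Set.Iio ⌈x / c⌉₊ ⊆ Set.Iio N ∪ {n | u n ≤ x} := fun n hn ↦
    (lt_or_ge n N).imp_right fun hNn ↦
      (hu n hNn).trans ((lt_div_iff₀' hc).1 (Nat.lt_ceil.1 hn)).le
  have hcard : ⌈x / c⌉₊ ≤ N + {n | u n ≤ x}.ncard := by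
    simpa using (Set.ncard_le_ncard hsub ((Set.finite_Iio N).union hfin)).trans
      (Set.ncard_union_le _ _)
  exact (Nat.le_ceil _).trans (mod_cast hcard)

lemma finite_sublevel_of_tendsto_div_natCast (hL : 0 < L)
    (hu : Tendsto (fun n ↦ u n / n) atTop (𝓝 L)) (x : ℝ) : {n | u n ≤ x}.Finite := by
  have hu_top : Tendsto u atTop atTop := by
    refine (hu.pos_mul_atTop hL tendsto_natCast_atTop_atTop).congr' ?_
    filter_upwards [eventually_ne_atTop 0] with n hn
    exact div_mul_cancel₀ _ (mod_cast hn)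
  have hlarge : ∀ᶠ n in cofinite, x < u n :=
    Nat.cofinite_eq_atTop ▸ hu_top.eventually_gt_atTop x
  simpa only [not_lt] using eventually_cofinite.1 hlarge

lemma eventually_ncard_sublevel_div_lt {a : ℝ} (hL : 0 < L)
    (hu : Tendsto (fun n ↦ u n / n) atTop (𝓝 L)) (ha : L⁻¹ < a) :
    ∀ᶠ x in atTop, ({n | u n ≤ x}.ncard : ℝ) / x < a := by
  have hnear : ∀ᶠ c in 𝓝[<] L, c⁻¹ < a ∧ 0 < c := nhdsWithin_le_nhds <|
    ((tendsto_inv₀ hL.ne').eventually_lt_const ha).and (eventually_gt_nhds hL)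
  obtain ⟨c, ⟨hca, hc⟩, hcL : c < L⟩ := (hnear.and self_mem_nhdsWithin).exists
  obtain ⟨N, hN⟩ : ∃ N : ℕ, ∀ n ≥ N, c * n ≤ u n := by
    refine eventually_atTop.1 ?_
    filter_upwards [hu.eventually_const_lt hcL, eventually_gt_atTop 0] with n hn hn0
    exact ((lt_div_iff₀ (mod_cast hn0)).1 hn).le
  have hlim : Tendsto (fun x : ℝ ↦ (N + 1) / x + c⁻¹) atTop (𝓝 c⁻¹) := by
    simpa using (tendsto_id.const_div_atTop ((N : ℝ) + 1)).add_const c⁻¹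
  filter_upwards [hlim.eventually_lt_const hca, eventually_gt_atTop 0] with x hxa hx
  calc ({n | u n ≤ x}.ncard : ℝ) / x ≤ (N + (x / c + 1)) / x := by
        gcongr; exact ncard_sublevel_le_of_mul_le hc hx.le hN
    _ = (N + 1) / x + c⁻¹ := by field_simp; ring
    _ < a := hxa

lemma eventually_lt_ncard_sublevel_div {a : ℝ} (hL : 0 < L)
    (hu : Tendsto (fun n ↦ u n / n) atTop (𝓝 L)) (ha : a < L⁻¹) :
    ∀ᶠ x in atTop, a < ({n | u n ≤ x}.ncard : ℝ) / x := by
  have hnear : ∀ᶠ c in 𝓝[>] L, a < c⁻¹ := nhdsWithin_le_nhds <|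
    (tendsto_inv₀ hL.ne').eventually_const_lt ha
  obtain ⟨c, hca, hLc : L < c⟩ := (hnear.and self_mem_nhdsWithin).exists
  have hc : 0 < c := hL.trans hLc
  obtain ⟨N, hN⟩ : ∃ N : ℕ, ∀ n ≥ N, u n ≤ c * n := by
    refine eventually_atTop.1 ?_
    filter_upwards [hu.eventually_lt_const hLc, eventually_gt_atTop 0] with n hn hn0
    exact ((div_lt_iff₀ (mod_cast hn0)).1 hn).le
  have hlim : Tendsto (fun x : ℝ ↦ c⁻¹ - N / x) atTop (𝓝 c⁻¹) := by
    simpa using (tendsto_id.const_div_atTop (N : ℝ)).const_sub c⁻¹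
  filter_upwards [hlim.eventually_const_lt hca, eventually_gt_atTop 0] with x hxa hx
  calc a < c⁻¹ - N / x := hxa
    _ = (x / c - N) / x := by field_simp
    _ ≤ ({n | u n ≤ x}.ncard : ℝ) / x := by
        gcongr
        exact sub_le_iff_le_add'.2 <| div_le_ncard_sublevel_of_le_mul hc
          (finite_sublevel_of_tendsto_div_natCast hL hu x) hN

lemma tendsto_ncard_sublevel_div (hL : 0 < L) (hu : Tendsto (fun n ↦ u n / n) atTop (𝓝 L)) :
    Tendsto (fun x ↦ ({n | u n ≤ x}.ncard : ℝ) / x) atTop (𝓝 L⁻¹) :=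
  tendsto_order.2 ⟨fun _ ↦ eventually_lt_ncard_sublevel_div hL hu,
    fun _ ↦ eventually_ncard_sublevel_div_lt hL hu⟩

end LinearGrowth

section ExponentialGrowth

lemma tendsto_log_div_of_tendsto_rpow_one_div {ι : Type*} {l : Filter ι} {f g : ι → ℝ} {α : ℝ}
    (hα : α ≠ 0) (hf : ∀ᶠ i in l, 0 < f i)
    (hlim : Tendsto (fun i ↦ f i ^ (1 / g i)) l (𝓝 α)) :
    Tendsto (fun i ↦ Real.log (f i) / g i) l (𝓝 (Real.log α)) := by
  refine (hlim.log hα).congr' ?_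
  filter_upwards [hf] with i hi
  rw [Real.log_rpow hi, one_div_mul_eq_div]

variable {h : ℕ → ℝ} {α : ℝ}

lemma eventually_one_lt_of_tendsto_rpow_one_div (hh : ∀ᶠ n in atTop, 0 ≤ h n) (hα : 1 < α)
    (hlim : Tendsto (fun n : ℕ ↦ h n ^ ((1 : ℝ) / n)) atTop (𝓝 α)) :
    ∀ᶠ n in atTop, 1 < h n := by
  filter_upwards [hh, hlim.eventually_const_lt hα] with n hn hroot
  contrapose! hroot
  exact Real.rpow_le_one hn hroot (by positivity)

lemma tendsto_log_max_one_div_natCast (hh : ∀ᶠ n in atTop, 0 ≤ h n) (hα : 1 < α)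
    (hlim : Tendsto (fun n : ℕ ↦ h n ^ ((1 : ℝ) / n)) atTop (𝓝 α)) :
    Tendsto (fun n ↦ Real.log (max (h n) 1) / n) atTop (𝓝 (Real.log α)) := by
  have h_one_lt := eventually_one_lt_of_tendsto_rpow_one_div hh hα hlim
  refine (tendsto_log_div_of_tendsto_rpow_one_div (zero_lt_one.trans hα).ne'
    (h_one_lt.mono fun _ ↦ zero_lt_one.trans) hlim).congr' ?_
  filter_upwards [h_one_lt] with n hn
  rw [max_eq_left hn.le]

lemma log_max_one_le_log_iff {x B : ℝ} (hB : 1 ≤ B) :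
    Real.log (max x 1) ≤ Real.log B ↔ x ≤ B := by
  rw [Real.log_le_log_iff (by positivity) (by positivity), max_le_iff, and_iff_left hB]

end ExponentialGrowth

theorem orbit_counting_of_arithmetic_degree_general {h : ℕ → ℝ} {α : ℝ}
    (hh : ∀ᶠ n in atTop, 0 ≤ h n) (hα : 1 < α)
    (hlim : Tendsto (fun n : ℕ ↦ h n ^ ((1 : ℝ) / n)) atTop (𝓝 α)) :
    (∀ B : ℝ, {n : ℕ | h n ≤ B}.Finite) ∧
    Tendsto (fun B : ℝ ↦ ({n : ℕ | h n ≤ B}.ncard : ℝ) / Real.log B) atTop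
      (𝓝 (1 / Real.log α)) := by
  have hL : 0 < Real.log α := Real.log_pos hα
  have hu := tendsto_log_max_one_div_natCast hh hα hlim
  constructor
  · intro B
    refine (finite_sublevel_of_tendsto_div_natCast hL hu (Real.log (max B 1))).subset fun n hn ↦ ?_
    exact (log_max_one_le_log_iff (le_max_right B 1)).2 (le_max_of_le_left hn)
  · rw [one_div]
    refine ((tendsto_ncard_sublevel_div hL hu).comp Real.tendsto_log_atTop).congr' ?_
    filter_upwards [eventually_ge_atTop 1] with B hB
    simp only [Function.comp_apply, log_max_one_le_log_iff hB]

/-- If `h(n) ≥ 1` and `h(n)^(1/n) → α > 1`, then for every real `B` the set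
`{n : h(n) ≤ B}` is finite, and its cardinality is asymptotic to `log B / log α`
as `B → ∞`. -/
theorem orbit_counting_of_arithmetic_degree (h : ℕ → ℝ) (h1 : ∀ n, 1 ≤ h n)
    (α : ℝ) (hα : 1 < α)
    (hlim : Tendsto (fun n : ℕ => h n ^ ((1 : ℝ) / n)) atTop (nhds α)) :
    (∀ B : ℝ, {n : ℕ | h n ≤ B}.Finite) ∧
    Tendsto (fun B : ℝ => ({n : ℕ | h n ≤ B}.ncard : ℝ) / Real.log B) atTop
      (nhds (1 / Real.log α)) :=
  orbit_counting_of_arithmetic_degree_general (.of_forall fun n ↦ zero_le_one.trans (h1 n)) hα hlim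
end

section
/- Let r ≥ 1, let C ⊆ ℝ^r be a closed convex cone that is pointed (C ∩ (−C) = {0}) and has nonempty interior, and let T : ℝ^r → ℝ^r be a linear map with T(C) ⊆ C. Then C contains a nonzero vector v with T(v) = ρ(T)·v, where ρ(T) denotes the spectral radius of T, i.e., the maximum of the absolute values of the complex eigenvalues of (a matrix representing) T. -/
/-!
Let `ρ` be the spectral radius of `T` and `e` an interior point of `C`. For every `l > ρ` the vector
`u = (l - T)⁻¹ e` is again interior to `C`: the set of such `l` contains all large `l`, and it is
open and closed in `(ρ, ∞)`, since `u ∈ C` forces `l u = e + T u` into the interior. Normalising the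
pairs `(u, 1)` and letting `l ↓ ρ` yields `(w, s) ≠ 0` with `w ∈ C`, `s ≥ 0` and `ρ w - T w = s e`.
If `s > 0`, then `l w - T w` is still interior for some `l < ρ`, so `l ^ n w - T ^ n w ∈ C` for all
`n`. Real parts `x` of small multiples of an eigenvector for an eigenvalue of modulus `ρ` satisfy
`w + x ∈ C`; iterating `T` and dividing by `ρ ^ n` gives `x ∈ C` for all of them, so `C` contains a
line. Hence `s = 0` and `T w = ρ w`.
-/

open Filter Topology Set
open scoped TensorProduct

section Spectrum

lemma algebraMap_mem_spectrum_baseChange_iff {K L V : Type*} [Field K] [Field L] [Algebra K L]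
    [AddCommGroup V] [Module K V] [FiniteDimensional K V] (f : Module.End K V) (k : K) :
    algebraMap K L k ∈ spectrum L (f.baseChange L) ↔ k ∈ spectrum K f := by
  rw [Module.End.mem_spectrum_iff_isRoot_charpoly, Module.End.mem_spectrum_iff_isRoot_charpoly,
    LinearMap.charpoly_baseChange, Polynomial.isRoot_map_iff (algebraMap K L).injective]

lemma mem_resolventSet_of_spectralRadius_baseChange_lt {K L V : Type*} [Field K] [NormedField L]
    [Algebra K L] [AddCommGroup V] [Module K V] [FiniteDimensional K V] {f : Module.End K V} {k : K}
    (h : spectralRadius L (f.baseChange L) < ‖algebraMap K L k‖₊) : k ∈ resolventSet K f := by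
  by_contra hk
  exact (algebraMap_mem_spectrum_baseChange_iff f k).2 hk
    (spectrum.mem_resolventSet_of_spectralRadius_lt h)

lemma exists_hasEigenvalue_nnnorm_eq_spectralRadius {𝕜 V : Type*} [NormedField 𝕜] [IsAlgClosed 𝕜]
    [AddCommGroup V] [Module 𝕜 V] [FiniteDimensional 𝕜 V] [Nontrivial V] (f : Module.End 𝕜 V) :
    ∃ μ : 𝕜, f.HasEigenvalue μ ∧ ‖μ‖₊ = spectralRadius 𝕜 f := by
  obtain ⟨μ, hμ, hmax⟩ := exists_max_image (spectrum 𝕜 f) (‖·‖₊) f.finite_spectrum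
    (spectrum.nonempty_of_isAlgClosed_of_finiteDimensional 𝕜 f)
  refine ⟨μ, Module.End.hasEigenvalue_iff_mem_spectrum.2 hμ, le_antisymm ?_ ?_⟩
  · exact le_iSup₂ (α := ENNReal) μ hμ
  · exact iSup₂_le fun ν hν ↦ ENNReal.coe_le_coe.2 (hmax ν hν)

-- For a complex eigenvector `w`, take `φ z = Re (z • w)`: this keeps the argument inside the real
-- space, where the cone lives.
lemma exists_linearMap_apply_mul_of_hasEigenvalue_baseChange {V : Type*} [AddCommGroup V]
    [Module ℝ V] {f : Module.End ℝ V} {μ : ℂ}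
    (hμ : Module.End.HasEigenvalue (f.baseChange ℂ) μ) :
    ∃ φ : ℂ →ₗ[ℝ] V, φ ≠ 0 ∧ ∀ z, f (φ z) = φ (μ * z) := by
  obtain ⟨w, hw⟩ := hμ.exists_hasEigenvector
  let re : ℂ ⊗[ℝ] V →ₗ[ℝ] V := TensorProduct.lid ℝ V ∘ₗ Complex.reLm.rTensor V
  have f_re (x) : f (re x) = re (f.baseChange ℂ x) := by
    induction x <;> simp_all [re]
  have re_neg_I_smul (x) :
      re (-Complex.I • x) = TensorProduct.lid ℝ V (Complex.imLm.rTensor V x) := by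
    induction x <;> simp_all [re, TensorProduct.smul_tmul']
  refine ⟨re ∘ₗ (LinearMap.toSpanSingleton ℂ _ w).restrictScalars ℝ, fun h ↦ hw.2 ?_, fun z ↦ ?_⟩
  · have re_smul (z : ℂ) : re (z • w) = 0 := LinearMap.congr_fun h z
    refine (TensorProduct.equivFinsuppOfBasisLeft Complex.basisOneI).map_eq_zero_iff.1 ?_
    ext i
    rw [TensorProduct.equivFinsuppOfBasisLeft_apply]
    fin_cases i
    · simpa [re] using! re_smul 1
    · simpa only [re_neg_I_smul] using! re_smul (-Complex.I)
  · simp [f_re, hw.apply_eq_smul, smul_smul, mul_comm]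

lemma spectralRadius_baseChange_eq_toMatrix' {𝕜 L ι : Type*} [Field 𝕜] [NormedField L] [Algebra 𝕜 L]
    [Fintype ι] [DecidableEq ι] (f : Module.End 𝕜 (ι → 𝕜)) :
    spectralRadius L (f.baseChange L) =
      spectralRadius L ((LinearMap.toMatrix' f).map (algebraMap 𝕜 L)) := by
  have h : LinearMap.toMatrixAlgEquiv (Algebra.TensorProduct.basis L (Pi.basisFun 𝕜 ι))
      (f.baseChange L) = (LinearMap.toMatrix' f).map (algebraMap 𝕜 L) :=
    LinearMap.toMatrix_baseChange L f (Pi.basisFun 𝕜 ι) (Pi.basisFun 𝕜 ι)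
  simp only [spectralRadius, ← h, AlgEquiv.spectrum_eq]

end Spectrum

section Cone

variable {E : Type*} [NormedAddCommGroup E] [NormedSpace ℝ E]

/-- A nonempty closed convex set stable under nonnegative scalars, as a `ProperCone`. Mathlib's
`ProperCone` requires neither pointedness nor interior points; these remain separate hypotheses. -/
def properConeOfConvex (C : Set E) (hclosed : IsClosed C) (hconv : Convex ℝ C)
    (hcone : ∀ t : ℝ, 0 ≤ t → ∀ v ∈ C, t • v ∈ C) (hne : C.Nonempty) : ProperCone ℝ E where
  carrier := C
  add_mem' {x y} hx hy := by
    have := hcone 2 zero_le_two _ (hconv.midpoint_mem hx hy)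
    rwa [midpoint_eq_smul_add, smul_smul, invOf_eq_inv, mul_inv_cancel₀ two_ne_zero,
      one_smul] at this
  zero_mem' := by
    obtain ⟨v, hv⟩ := hne
    simpa using hcone 0 le_rfl v hv
  smul_mem' t v hv := hcone t t.2 v hv
  isClosed' := hclosed

variable {C : ProperCone ℝ E}

lemma add_mem_interior {x y : E} (hx : x ∈ interior (C : Set E)) (hy : y ∈ C) :
    x + y ∈ interior (C : Set E) := by
  refine interior_mono ?_ (subset_interior_add_left (add_mem_add hx hy))
  rintro _ ⟨a, ha, b, hb, rfl⟩
  exact add_mem ha hb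

lemma smul_mem_interior {t : ℝ} (ht : 0 < t) {x : E} (hx : x ∈ interior (C : Set E)) :
    t • x ∈ interior (C : Set E) := by
  refine interior_mono ?_ (interior_smul₀ ht.ne' (C : Set E) ▸ smul_mem_smul_set hx)
  rintro _ ⟨y, hy, rfl⟩
  exact C.smul_mem hy ht.le

lemma mem_interior_of_smul_sub_mem_interior {T : E → E} (hT : MapsTo T C C) {l : ℝ} (hl : 0 < l)
    {u : E} (hu : u ∈ C) (h : l • u - T u ∈ interior (C : Set E)) :
    u ∈ interior (C : Set E) := by
  have hlu : l • u ∈ interior (C : Set E) := by simpa using add_mem_interior h (hT hu)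
  simpa [hl.ne'] using smul_mem_interior (inv_pos.2 hl) hlu

lemma eq_zero_of_eventually_mem (hC : (C.toPointedCone : ConvexCone ℝ E).Salient)
    {V : Type*} [AddCommGroup V] [Module ℝ V] [TopologicalSpace V] [IsTopologicalAddGroup V]
    [ContinuousSMul ℝ V] {φ : V →ₗ[ℝ] E} (h : ∀ᶠ x in 𝓝 0, φ x ∈ C) : φ = 0 := by
  ext x
  have tendsto_smul (y : V) : Tendsto (fun t : ℝ ↦ t • y) (𝓝[>] 0) (𝓝 0) :=
    tendsto_nhdsWithin_of_tendsto_nhds <|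
      (continuous_id.smul continuous_const).tendsto' 0 0 (zero_smul ℝ y)
  obtain ⟨t, ⟨hx, hnx⟩, ht : 0 < t⟩ := (((tendsto_smul x).eventually h).and
    ((tendsto_smul (-x)).eventually h)).and self_mem_nhdsWithin |>.exists
  have htx : φ (t • x) = 0 := by
    by_contra hne
    exact hC _ hx hne (by simpa using hnx)
  simpa [ht.ne'] using htx

lemma zero_notMem_interior [Nontrivial E] (hC : (C.toPointedCone : ConvexCone ℝ E).Salient) :
    (0 : E) ∉ interior (C : Set E) := fun h ↦
  one_ne_zero (α := Module.End ℝ E) (eq_zero_of_eventually_mem hC (mem_interior_iff_mem_nhds.1 h))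

lemma pow_smul_add_apply_mem {T : E →ₗ[ℝ] E} (hT : MapsTo T C C) {μ : ℂ} {φ : ℂ →ₗ[ℝ] E}
    (hTφ : ∀ z, T (φ z) = φ (μ * z)) {l : ℝ} (hl : 0 ≤ l) {u : E} (h : l • u - T u ∈ C) {z : ℂ}
    (hz : u + φ z ∈ C) (n : ℕ) : l ^ n • u + φ (μ ^ n * z) ∈ C := by
  induction n with
  | zero => simpa using hz
  | succ n ih =>
    have := add_mem (hT ih) (C.smul_mem h (pow_nonneg hl n))
    rw [map_add, map_smul, hTφ, ← mul_assoc, ← pow_succ'] at this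
    convert this using 1
    module

lemma norm_le_of_smul_sub_mem (hC : (C.toPointedCone : ConvexCone ℝ E).Salient) {T : E →ₗ[ℝ] E}
    (hT : MapsTo T C C) {μ : ℂ} {φ : ℂ →ₗ[ℝ] E} (hφ : φ ≠ 0) (hTφ : ∀ z, T (φ z) = φ (μ * z))
    {l : ℝ} (hl : 0 ≤ l) {u : E} (hu : u ∈ interior (C : Set E)) (h : l • u - T u ∈ C) :
    ‖μ‖ ≤ l := by
  by_contra! hlμ
  have hμ : 0 < ‖μ‖ := hl.trans_lt hlμ
  have hμ0 : μ ≠ 0 := norm_pos_iff.1 hμ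
  have hnear : ∀ᶠ z in 𝓝 0, u + φ z ∈ C := by
    have : Tendsto (fun z ↦ u + φ z) (𝓝 0) (𝓝 u) := by
      simpa using (φ.continuous_of_finiteDimensional.tendsto 0).const_add u
    exact this (mem_interior_iff_mem_nhds.1 hu)
  obtain ⟨δ, hδ, hball⟩ := Metric.eventually_nhds_iff_ball.1 hnear
  refine hφ (eq_zero_of_eventually_mem hC ?_)
  filter_upwards [Metric.ball_mem_nhds 0 hδ] with z hz
  -- Starting from `z` rotated by `(‖μ‖ / μ) ^ n`, the `n`-th iterate returns to the ray of `φ z`.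
  have hmem (n : ℕ) : (l / ‖μ‖) ^ n • u + φ z ∈ C := by
    have hrot : u + φ ((‖μ‖ / μ) ^ n * z) ∈ C := hball _ (by simpa [hμ.ne'] using hz)
    have := C.smul_mem (pow_smul_add_apply_mem hT hTφ hl h hrot n) (r := (‖μ‖ ^ n)⁻¹)
      (by positivity)
    rwa [smul_add, smul_smul, inv_mul_eq_div, ← div_pow, ← mul_assoc, ← mul_pow,
      mul_div_cancel₀ _ hμ0, ← map_smul, ← Complex.ofReal_pow, ← Complex.real_smul,
      inv_smul_smul₀ (by positivity)] at this
  have hlim : Tendsto (fun n : ℕ ↦ (l / ‖μ‖) ^ n • u + φ z) atTop (𝓝 (φ z)) := by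
    simpa using ((tendsto_pow_atTop_nhds_zero_of_lt_one (by positivity)
      ((div_lt_one hμ).2 hlμ)).smul_const u).add_const (φ z)
  exact C.isClosed.mem_of_tendsto hlim (Eventually.of_forall hmem)

lemma norm_lt_of_smul_sub_mem_interior [Nontrivial E]
    (hC : (C.toPointedCone : ConvexCone ℝ E).Salient) {T : E →ₗ[ℝ] E}
    (hT : MapsTo T C C) {μ : ℂ} {φ : ℂ →ₗ[ℝ] E} (hφ : φ ≠ 0) (hTφ : ∀ z, T (φ z) = φ (μ * z))
    {l : ℝ} (hl : 0 ≤ l) {u : E} (hu : u ∈ C) (h : l • u - T u ∈ interior (C : Set E)) :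
    ‖μ‖ < l := by
  have hl0 : 0 < l := hl.lt_of_ne' fun h0 ↦ zero_notMem_interior hC <| by
    simpa [h0] using add_mem_interior h (hT hu)
  have hnear : ∀ᶠ k in 𝓝 l, k • u - T u ∈ interior (C : Set E) :=
    (by fun_prop : Continuous fun k : ℝ ↦ k • u - T u).continuousAt.eventually_mem
      (isOpen_interior.mem_nhds h)
  obtain ⟨k, hk, h0k, hkl⟩ :=
    ((hnear.filter_mono nhdsWithin_le_nhds).and (Ioo_mem_nhdsLT hl0)).exists
  exact (norm_le_of_smul_sub_mem hC hT hφ hTφ h0k.le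
    (mem_interior_of_smul_sub_mem_interior hT hl0 hu h) (interior_subset hk)).trans_lt hkl

lemma smul_resolvent_apply_sub {T : E →L[ℝ] E} {l : ℝ} (hl : l ∈ resolventSet ℝ T) (x : E) :
    l • resolvent T l x - T (resolvent T l x) = x := by
  simpa [Algebra.algebraMap_eq_smul_one] using!
    DFunLike.congr_fun (Ring.mul_inverse_cancel _ (spectrum.mem_resolventSet_iff.1 hl)) x

lemma eventually_resolvent_apply_mem_interior [CompleteSpace E] (T : E →L[ℝ] E) {e : E}
    (he : e ∈ interior (C : Set E)) :
    ∀ᶠ l : ℝ in atTop, resolvent T l e ∈ interior (C : Set E) := by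
  have hlim : Tendsto (fun l : ℝ ↦ e + T (resolvent T l e)) atTop (𝓝 e) := by
    have hR : Tendsto (fun l : ℝ ↦ resolvent T l) atTop (𝓝 0) :=
      (spectrum.resolvent_tendsto_cobounded T).mono_left IsOrderBornology.atTop_le_cobounded
    have hRe : Tendsto (fun l : ℝ ↦ resolvent T l e) atTop (𝓝 0) :=
      ((ContinuousLinearMap.apply ℝ E e).continuous.tendsto' 0 0 (map_zero _)).comp hR
    simpa using ((T.continuous.tendsto' 0 0 (map_zero T)).comp hRe).const_add e
  filter_upwards [hlim.eventually_mem (isOpen_interior.mem_nhds he),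
    eventually_gt_atTop (‖T‖ * ‖(1 : E →L[ℝ] E)‖)] with l hmem hl
  have hl0 : 0 < l := hl.trans_le' (by positivity)
  have hres : l ∈ resolventSet ℝ T :=
    spectrum.mem_resolventSet_of_norm_lt_mul (hl.trans_le (le_abs_self l))
  rw [← eq_add_of_sub_eq (smul_resolvent_apply_sub hres e)] at hmem
  simpa [hl0.ne'] using smul_mem_interior (inv_pos.2 hl0) hmem

lemma resolvent_apply_mem_interior [CompleteSpace E] {T : E →L[ℝ] E} (hT : MapsTo T C C)
    {a : ℝ} (ha : 0 ≤ a) (hres : Ioi a ⊆ resolventSet ℝ T) {e : E}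
    (he : e ∈ interior (C : Set E)) {l : ℝ} (hl : a < l) :
    resolvent T l e ∈ interior (C : Set E) := by
  have hcont : ContinuousOn (fun l ↦ resolvent T l e) (Ioi a) := fun k hk ↦
    ((spectrum.hasDerivAt_resolvent_const_left (hres hk)).continuousAt.clm_apply
      continuousAt_const).continuousWithinAt
  let S := Ioi a ∩ (fun l ↦ resolvent T l e) ⁻¹' interior C
  suffices Ioi a ⊆ S from (this hl).2
  refine isPreconnected_Ioi.subset_of_closure_inter_subset
    (hcont.isOpen_inter_preimage isOpen_Ioi isOpen_interior) ?_ ?_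
  · obtain ⟨k, hk, hak⟩ := ((eventually_resolvent_apply_mem_interior T he).and
      (eventually_gt_atTop a)).exists
    exact ⟨k, hak, hak, hk⟩
  · rintro k ⟨hkS, hk⟩
    have hkC : resolvent T k e ∈ C := by
      have := ((hcont k hk).mono inter_subset_left).mem_closure hkS fun _ h ↦ interior_subset h.2
      rwa [C.isClosed.closure_eq] at this
    refine ⟨hk, mem_interior_of_smul_sub_mem_interior hT (ha.trans_lt hk) hkC ?_⟩
    rwa [smul_resolvent_apply_sub (hres hk)]

lemma exists_smul_sub_eq_smul_of_mem_closure [ProperSpace E] (T : E →L[ℝ] E) (e : E) {a : ℝ}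
    (ha : a ∈ closure {l : ℝ | ∃ u ∈ C, l • u - T u = e}) :
    ∃ w ∈ C, ∃ s ≥ (0 : ℝ), (w, s) ≠ 0 ∧ a • w - T w = s • e := by
  obtain ⟨l, hl, hla⟩ := mem_closure_iff_seq_limit.1 ha
  choose u huC hu using hl
  have hcompact : IsCompact (((C : Set E) ×ˢ Ici (0 : ℝ)) ∩ Metric.sphere 0 1) :=
    (isCompact_sphere 0 1).inter_left (C.isClosed.prod isClosed_Ici)
  have norm_pos (n) : 0 < ‖(u n, (1 : ℝ))‖ := by simp
  obtain ⟨⟨w, s⟩, ⟨⟨hw, hs⟩, hws⟩, k, hk, hlim⟩ := hcompact.tendsto_subseq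
    (x := fun n ↦ ‖(u n, (1 : ℝ))‖⁻¹ • (u n, (1 : ℝ))) fun n ↦
      ⟨⟨C.smul_mem (huC n) (by positivity), by simp⟩,
        by rw [mem_sphere_zero_iff_norm, norm_smul, norm_inv, norm_norm,
          inv_mul_cancel₀ (norm_pos n).ne']⟩
  refine ⟨w, hw, s, hs, ne_zero_of_mem_unit_sphere ⟨_, hws⟩, ?_⟩
  have hw_lim := (continuous_fst.tendsto _).comp hlim
  have hs_lim := (continuous_snd.tendsto _).comp hlim
  refine tendsto_nhds_unique (((hla.comp hk.tendsto_atTop).smul hw_lim).sub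
    ((T.continuous.tendsto _).comp hw_lim)) ((hs_lim.smul_const e).congr fun n ↦ ?_)
  simp [← hu (k n), smul_sub, smul_comm (l (k n))]

end Cone

theorem birkhoff_cone_eigenvector_general {E : Type*} [NormedAddCommGroup E] [NormedSpace ℝ E]
    [FiniteDimensional ℝ E] [Nontrivial E] (C : ProperCone ℝ E)
    (hC : (C.toPointedCone : ConvexCone ℝ E).Salient) (hint : (interior (C : Set E)).Nonempty)
    (T : E →ₗ[ℝ] E) (hT : MapsTo T C C) :
    ∃ v ∈ C, v ≠ 0 ∧ T v = (spectralRadius ℂ (T.baseChange ℂ)).toReal • v := by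
  have : ProperSpace E := FiniteDimensional.proper_real E
  obtain ⟨e, he⟩ := hint
  obtain ⟨μ, hμ, hμρ⟩ := exists_hasEigenvalue_nnnorm_eq_spectralRadius (T.baseChange ℂ)
  obtain ⟨φ, hφ, hTφ⟩ := exists_linearMap_apply_mul_of_hasEigenvalue_baseChange hμ
  have hres : Ioi ‖μ‖ ⊆ resolventSet ℝ (Module.End.toContinuousLinearMap E T) := fun l hl ↦
    AlgHom.mem_resolventSet_apply (Module.End.toContinuousLinearMap E) <|
      mem_resolventSet_of_spectralRadius_baseChange_lt (L := ℂ) <| by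
        rw [← hμρ, ENNReal.coe_lt_coe, ← NNReal.coe_lt_coe]
        simpa using hl.trans_le (le_abs_self l)
  rw [← hμρ, ENNReal.coe_toReal, coe_nnnorm]
  obtain ⟨w, hw, s, hs, hws, hTw⟩ := exists_smul_sub_eq_smul_of_mem_closure (C := C)
      (Module.End.toContinuousLinearMap E T) e (a := ‖μ‖) <| by
    refine closure_mono (s := Ioi ‖μ‖) (fun l hl ↦ ?_) (by simp)
    exact ⟨_, interior_subset (resolvent_apply_mem_interior hT (norm_nonneg μ) hres he hl),
      smul_resolvent_apply_sub (hres hl) e⟩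
  obtain rfl | hs := hs.eq_or_lt
  · exact ⟨w, hw, by simpa using hws, (sub_eq_zero.1 (hTw.trans (zero_smul ℝ e))).symm⟩
  · exact absurd (norm_lt_of_smul_sub_mem_interior hC hT hφ hTφ (norm_nonneg μ) hw
      (hTw ▸ smul_mem_interior hs he)) (lt_irrefl _)

/-- Birkhoff's Perron–Frobenius-type theorem: a closed, pointed convex cone
`C ⊆ ℝ^r` with nonempty interior that is preserved by a linear map `T` contains
a nonzero eigenvector of `T` whose eigenvalue is the spectral radius of `T`,
i.e., the maximum absolute value of the complex eigenvalues of a matrix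
representing `T`. -/
theorem birkhoff_cone_eigenvector {r : ℕ} (hr : 1 ≤ r)
    (C : Set (Fin r → ℝ)) (hclosed : IsClosed C) (hconv : Convex ℝ C)
    (hcone : ∀ t : ℝ, 0 ≤ t → ∀ v ∈ C, t • v ∈ C)
    (hpointed : C ∩ (-C) = {0}) (hint : (interior C).Nonempty)
    (T : (Fin r → ℝ) →ₗ[ℝ] (Fin r → ℝ)) (hT : ∀ v ∈ C, T v ∈ C) :
    ∃ v ∈ C, v ≠ 0 ∧
      T v = (spectralRadius ℂ ((LinearMap.toMatrix' T).map
        (algebraMap ℝ ℂ))).toReal • v := by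
  have : Nonempty (Fin r) := ⟨⟨0, hr⟩⟩
  rw [← spectralRadius_baseChange_eq_toMatrix']
  exact birkhoff_cone_eigenvector_general
    (properConeOfConvex C hclosed hconv hcone (hint.mono interior_subset))
    ((PointedCone.salient_iff_inter_neg_eq_singleton _).2 hpointed) hint T hT
end
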